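/- arXiv:2512.05312 — 3 statements merged into one kernel-verified Lean document; each statement's English description precedes it below -/
import Mathlib

section
/- Let (M_t)_{t∈ℝ} be a family of complete metric spaces and let (μ_{st})_{s,t∈ℝ} be a local approximate flow with data ε > 0, exponents (a_i, b_i), constants C_i, and Lipschitz-control function g. Set K := 2^{1+ε} (Σ_{i=1}^{n} C_i) ζ(1+ε), where ζ is the Riemann zeta function. Then for all s, t ∈ ℝ and every subdivision I = (t_0, …, t_k) of the interval between s and t, d_{st}(μ_{st}, μ^I_{st}) ≤ K · g(|t−s|) · |t−s|^{1+ε}. -/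
/-!
The proof is the point-removal argument of the sewing lemma (Young). A composition along a chain
with `k ≥ 1` interior points and total variation at most `D` has, by averaging (`exists_short`), an
interior point `u` with neighbours `p`, `q` such that `|u - p| + |q - u| ≤ 2 D / k`. Deleting `u`
replaces `μ p u ∘ μ u q` by `μ p q`; the three-point estimate bounds this change by
`(∑ C i) (2 D / k) ^ (1 + ε)` (`edist_chain_head`), and the part of the chain to the left of `p`
magnifies it by at most `g D`. Deletion does not increase the variation, so it can be repeated until
only `μ s t` is left, and the errors add up to at most
`g D (∑ C i) (2 D) ^ (1 + ε) ∑ k ^ (-(1 + ε))` (`edist_chain_le`). For a monotone subdivision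
`D = |t - s|`.

Chains are encoded by the list of their interior points, the endpoints being kept as separate
arguments: deleting an interior point then changes neither the source nor the target space.
-/

open scoped ENNReal

noncomputable section

/-- Extended uniform distance `sup_x edist (u x) (v x)` between two maps. -/
def unifDist {α β : Type*} [PseudoEMetricSpace β] (u v : α → β) : ℝ≥0∞ :=
  ⨆ x, edist (u x) (v x)

/-- `h` is Lipschitz with (real) constant `K`:
`edist (h y) (h y') ≤ K * edist y y'` for all `y, y'`. -/
def LipWith {α β : Type*} [PseudoEMetricSpace α] [PseudoEMetricSpace β]
    (K : ℝ) (h : α → β) : Prop :=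
  ∀ y y', edist (h y) (h y') ≤ ENNReal.ofReal K * edist y y'

/-- The composition `μ (x 0) (x 1) ∘ μ (x 1) (x 2) ∘ ⋯ ∘ μ (x (k-1)) (x k)`
of the maps `μ` along the finite chain of points `x 0, …, x k`. -/
def compAlong {P : Type*} {M : P → Type*} (μ : ∀ x y : P, M y → M x) (x : ℕ → P) :
    ∀ k : ℕ, M (x k) → M (x 0)
  | 0 => id
  | k+1 => fun m => compAlong μ x k (μ (x k) (x (k+1)) m)

/-- Transport a map `M a → M b` along equalities of base points. -/
def castM {P : Type*} (M : P → Type*) {a b c d : P} (h1 : a = c) (h2 : b = d)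
    (f : M a → M b) : M c → M d :=
  fun m => cast (congrArg M h2) (f (cast (congrArg M h1.symm) m))

/-- A subdivision `(t_0, …, t_k)` of the interval between `s` and `t`: a finite sequence
with `t_0 = s`, `t_k = t`, arranged in increasing order if `s < t` and decreasing order
if `s > t`. -/
structure Subdivision (s t : ℝ) where
  k : ℕ
  pt : ℕ → ℝ
  k_pos : 0 < k
  first : pt 0 = s
  last : pt k = t
  mono_of_le : s ≤ t → ∀ i j, i ≤ j → j ≤ k → pt i ≤ pt j
  anti_of_ge : t ≤ s → ∀ i j, i ≤ j → j ≤ k → pt j ≤ pt i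

/-- The mesh `max_{1 ≤ j ≤ k} |t_j - t_{j-1}|` of a subdivision. -/
def Subdivision.mesh {s t : ℝ} (I : Subdivision s t) : ℝ :=
  ⨆ j : Fin I.k, |I.pt (j.1 + 1) - I.pt j.1|

/-- The value `ζ(x) = Σ_{ℓ ≥ 1} ℓ^{-x}` of the Riemann zeta function at a real `x`. -/
def zetaR (x : ℝ) : ℝ := ∑' m : ℕ, ((m : ℝ) + 1) ^ (-x)

/-- A local approximate flow on a family `(M t)` of complete metric spaces, with data
`ε > 0`, exponents `a i, b i > 0` with `a i + b i = 1 + ε`, constants `C i > 0`, and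
Lipschitz-control functions `f` and `g`. -/
structure IsLocalApproxFlow {M : ℝ → Type*} [∀ t, MetricSpace (M t)]
    (μ : ∀ s t : ℝ, M t → M s) (ε : ℝ) (n : ℕ) (a b C : Fin n → ℝ)
    (f g : ℝ → ℝ) : Prop where
  continuous : ∀ s t, Continuous (μ s t)
  id_eq : ∀ t, μ t t = id
  eps_pos : 0 < ε
  n_pos : 0 < n
  a_pos : ∀ i, 0 < a i
  b_pos : ∀ i, 0 < b i
  ab_eq : ∀ i, a i + b i = 1 + ε
  C_pos : ∀ i, 0 < C i
  f_cont : Continuous f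
  f_nonneg : ∀ x, 0 ≤ f x
  f_zero : f 0 = 0
  lip : ∀ s t, LipWith (1 + f (t - s)) (μ s t)
  three_point : ∀ s t u, unifDist (μ s t) (fun x => μ s u (μ u t x)) ≤
    ENNReal.ofReal (∑ i, C i * |t - u| ^ a i * |u - s| ^ b i)
  g_mono : MonotoneOn g (Set.Ici 0)
  g_cont : ContinuousOn g (Set.Ici 0)
  g_ge_one : ∀ x ∈ Set.Ici (0 : ℝ), 1 ≤ g x
  lip_chain : ∀ (k : ℕ) (u : ℕ → ℝ),
    LipWith (g (∑ j ∈ Finset.range k, |u (j + 1) - u j|)) (compAlong μ u k)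

/-- The composition `μ^I_{st} = μ_{t_0 t_1} ∘ ⋯ ∘ μ_{t_{k-1} t_k}` along a subdivision `I`
of the interval between `s` and `t`, viewed as a map `M t → M s`. -/
def Subdivision.comp {M : ℝ → Type*} {s t : ℝ} (I : Subdivision s t)
    (μ : ∀ s t : ℝ, M t → M s) : M t → M s :=
  castM M I.last I.first (compAlong μ I.pt I.k)

/-- The composition `μ s u₁ ∘ μ u₁ u₂ ∘ ⋯ ∘ μ uₖ t` along the chain from `s` to `t` whose list of
interior points is `[u₁, …, uₖ]`. -/
def chainMap {M : ℝ → Type*} (μ : ∀ s t : ℝ, M t → M s) :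
    ∀ (_ : List ℝ) (s t : ℝ), M t → M s
  | [], s, t => μ s t
  | u :: l, s, t => fun m => μ s u (chainMap μ l u t m)

/-- The total variation `|u₁ - s| + |u₂ - u₁| + ⋯ + |t - uₖ|` of the chain from `s` to `t` with
interior points `[u₁, …, uₖ]`. -/
def chainVar : List ℝ → ℝ → ℝ → ℝ
  | [], s, t => |t - s|
  | u :: l, s, t => |u - s| + chainVar l u t

/-- The length of the first step of the chain from `s` to `t` with the given interior points. -/
def firstStep : List ℝ → ℝ → ℝ → ℝ
  | [], s, t => |t - s|
  | u :: _, s, _ => |u - s|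

lemma firstStep_nonneg (l : List ℝ) (s t : ℝ) : 0 ≤ firstStep l s t := by
  cases l <;> exact abs_nonneg _

lemma chainVar_nonneg (l : List ℝ) (s t : ℝ) : 0 ≤ chainVar l s t := by
  induction l generalizing s with
  | nil => exact abs_nonneg _
  | cons u l ih => exact add_nonneg (abs_nonneg _) (ih u)

lemma firstStep_le_chainVar (l : List ℝ) (s t : ℝ) : firstStep l s t ≤ chainVar l s t := by
  cases l with
  | nil => exact le_rfl
  | cons u l => exact le_add_of_nonneg_right (chainVar_nonneg l u t)

lemma chainVar_append (l r : List ℝ) (s p t : ℝ) :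
    chainVar (l ++ p :: r) s t = chainVar l s p + chainVar r p t := by
  induction l generalizing s with
  | nil => rfl
  | cons u l ih => simp only [List.cons_append, chainVar, ih]; ring

lemma chainMap_append {M : ℝ → Type*} (μ : ∀ s t : ℝ, M t → M s) (l r : List ℝ) (s p t : ℝ)
    (m : M t) : chainMap μ (l ++ p :: r) s t m = chainMap μ l s p (chainMap μ r p t m) := by
  induction l generalizing s with
  | nil => rfl
  | cons u l ih => simp only [List.cons_append, chainMap, ih]

lemma chainVar_cons_ge (l : List ℝ) (s u t : ℝ) : chainVar l s t ≤ chainVar (u :: l) s t := by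
  cases l with
  | nil => simp only [chainVar]; linarith [abs_sub_le t u s]
  | cons q l => simp only [chainVar]; linarith [abs_sub_le q u s]

lemma compAlong_eq_chainMap {M : ℝ → Type*} (μ : ∀ s t : ℝ, M t → M s) (x : ℕ → ℝ) (k : ℕ)
    (m : M (x (k + 1))) :
    compAlong μ x (k + 1) m =
      chainMap μ ((List.range k).map fun i => x (i + 1)) (x 0) (x (k + 1)) m := by
  induction k with
  | zero => rfl
  | succ k ih =>
    rw [List.range_succ, List.map_append, List.map_singleton, chainMap_append, ← ih]
    rfl

lemma chainVar_map_range (x : ℕ → ℝ) (k : ℕ) :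
    chainVar ((List.range k).map fun i => x (i + 1)) (x 0) (x (k + 1)) =
      ∑ j ∈ Finset.range (k + 1), |x (j + 1) - x j| := by
  induction k with
  | zero => simp [chainVar]
  | succ k ih =>
    rw [List.range_succ, List.map_append, List.map_singleton, chainVar_append, ih,
      Finset.sum_range_succ _ (k + 1)]
    rfl

/-- Every list of interior points comes from a sequence of the kind used in `compAlong`. -/
lemma exists_seq (l : List ℝ) (s t : ℝ) : ∃ x : ℕ → ℝ, x 0 = s ∧ x (l.length + 1) = t ∧
    (List.range l.length).map (fun i => x (i + 1)) = l := by
  induction l generalizing s with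
  | nil => exact ⟨fun i => if i = 0 then s else t, by simp, by simp, by simp⟩
  | cons u l ih =>
    obtain ⟨x, h0, h1, h2⟩ := ih u
    refine ⟨fun i => Nat.casesOn i s x, rfl, h1, ?_⟩
    rw [List.length_cons, List.range_succ_eq_map, List.map_cons, List.map_map]
    exact congrArg₂ List.cons h0 h2

/-- Averaging over adjacent pairs of steps: the sum of these pairs is at most twice the variation
minus the first step, so either some interior point `u` has adjacent steps of total length at most
`c`, or `k c` is at most that quantity, strictly below it if `k > 0`, where `k = l.length`. The
point `u` is either the first interior point or has an interior predecessor `p`. -/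
lemma short_or_le (c t : ℝ) (l : List ℝ) (s : ℝ) :
    (∃ u r, l = u :: r ∧ |u - s| + firstStep r u t ≤ c) ∨
    (∃ l₁ p u r, l = l₁ ++ p :: u :: r ∧ |u - p| + firstStep r u t ≤ c) ∨
    (l.length * c ≤ 2 * chainVar l s t - firstStep l s t ∧
      (l ≠ [] → l.length * c < 2 * chainVar l s t - firstStep l s t)) := by
  induction l generalizing s with
  | nil =>
    right; right
    have := abs_nonneg (t - s)
    simp only [List.length_nil, Nat.cast_zero, chainVar, firstStep, ne_eq, not_true_eq_false,
      false_imp_iff, and_true]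
    linarith
  | cons u l ih =>
    by_cases hc : |u - s| + firstStep l u t ≤ c
    · exact Or.inl ⟨u, l, rfl, hc⟩
    · right
      rcases ih u with ⟨v, r, rfl, hv⟩ | ⟨l₁, p, v, r, rfl, hv⟩ | ⟨h1, _⟩
      · exact Or.inl ⟨[], u, v, r, rfl, hv⟩
      · exact Or.inl ⟨u :: l₁, p, v, r, rfl, hv⟩
      · right
        have : ((u :: l).length : ℝ) * c <
            2 * chainVar (u :: l) s t - firstStep (u :: l) s t := by
          simp only [List.length_cons, Nat.cast_add, Nat.cast_one, chainVar, firstStep]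
          push Not at hc
          linarith
        exact ⟨this.le, fun _ => this⟩

lemma exists_short {D t : ℝ} {k : ℕ} {l : List ℝ} {s : ℝ} (hl : l.length = k + 1)
    (hD : chainVar l s t ≤ D) :
    (∃ u r, l = u :: r ∧ |u - s| + firstStep r u t ≤ 2 * D / (k + 1)) ∨
    (∃ l₁ p u r, l = l₁ ++ p :: u :: r ∧ |u - p| + firstStep r u t ≤ 2 * D / (k + 1)) := by
  rcases short_or_le (2 * D / (k + 1)) t l s with h | h | ⟨_, h⟩
  · exact Or.inl h
  · exact Or.inr h
  -- Here `2 D < 2 * chainVar l s t - firstStep l s t`, which contradicts `hD`.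
  · have h' := h (by rintro rfl; simp at hl)
    rw [hl] at h'
    push_cast at h'
    rw [mul_div_cancel₀ _ (by positivity)] at h'
    linarith [firstStep_nonneg l s t]

section Flow

variable {M : ℝ → Type*} [∀ t, MetricSpace (M t)] {μ : ∀ s t : ℝ, M t → M s} {ε : ℝ} {n : ℕ}
  {a b C : Fin n → ℝ} {f g : ℝ → ℝ}

lemma edist_chainMap_le (h : IsLocalApproxFlow μ ε n a b C f g) {D : ℝ} {l : List ℝ} {s t : ℝ}
    (hD : chainVar l s t ≤ D) (y y' : M t) :
    edist (chainMap μ l s t y) (chainMap μ l s t y') ≤ ENNReal.ofReal (g D) * edist y y' := by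
  obtain ⟨x, h0, h1, h2⟩ := exists_seq l s t
  generalize l.length = k at *
  subst h0 h1 h2
  have hl := h.lip_chain (k + 1) x y y'
  rw [← chainVar_map_range, compAlong_eq_chainMap, compAlong_eq_chainMap] at hl
  refine hl.trans ?_
  have h0 := chainVar_nonneg ((List.range k).map fun i => x (i + 1)) (x 0) (x (k + 1))
  gcongr
  exact h.g_mono h0 (h0.trans hD) hD

lemma edist_three_point_le (h : IsLocalApproxFlow μ ε n a b C f g) {c s u t : ℝ}
    (hc : |u - s| + |t - u| ≤ c) (m : M t) :
    edist (μ s t m) (μ s u (μ u t m)) ≤ ENNReal.ofReal ((∑ i, C i) * c ^ (1 + ε)) := by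
  refine ((le_iSup (fun x => edist (μ s t x) (μ s u (μ u t x))) m).trans
    (h.three_point s t u)).trans (ENNReal.ofReal_le_ofReal ?_)
  rw [Finset.sum_mul]
  refine Finset.sum_le_sum fun i _ => ?_
  have h1 := abs_nonneg (u - s)
  have h2 := abs_nonneg (t - u)
  have hc0 : 0 < 1 + ε := by linarith [h.eps_pos]
  rw [← h.ab_eq i, Real.rpow_add_of_nonneg (by linarith) (h.a_pos i).le (h.b_pos i).le, mul_assoc]
  have hC := (h.C_pos i).le
  have ha := (h.a_pos i).le
  have hb := (h.b_pos i).le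
  have hc1 : 0 ≤ c := by linarith
  have h3 : |t - u| ≤ c := by linarith
  have h4 : |u - s| ≤ c := by linarith
  gcongr

/-- The cost of deleting the first interior point of a chain. -/
lemma edist_chain_head (h : IsLocalApproxFlow μ ε n a b C f g) {c p u t : ℝ} {r : List ℝ}
    (hc : |u - p| + firstStep r u t ≤ c) (m : M t) :
    edist (chainMap μ r p t m) (chainMap μ (u :: r) p t m) ≤
      ENNReal.ofReal ((∑ i, C i) * c ^ (1 + ε)) := by
  cases r with
  | nil => exact edist_three_point_le h hc m
  | cons q r => exact edist_three_point_le h hc (chainMap μ r q t m)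

/-- One interior point can be deleted at a cost governed by the number of interior points. -/
lemma exists_remove (h : IsLocalApproxFlow μ ε n a b C f g) {D s t : ℝ} {k : ℕ} {l : List ℝ}
    (hl : l.length = k + 1) (hD : chainVar l s t ≤ D) :
    ∃ l' : List ℝ, l'.length = k ∧ chainVar l' s t ≤ D ∧ ∀ m : M t,
      edist (chainMap μ l' s t m) (chainMap μ l s t m) ≤
        ENNReal.ofReal (g D * ((∑ i, C i) * (2 * D / (k + 1)) ^ (1 + ε))) := by
  have hD0 : 0 ≤ D := (chainVar_nonneg l s t).trans hD
  have hg : 1 ≤ g D := h.g_ge_one D hD0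
  have hC : 0 ≤ ∑ i, C i := Finset.sum_nonneg fun i _ => (h.C_pos i).le
  rcases exists_short hl hD with ⟨u, r, rfl, hu⟩ | ⟨l₁, p, u, r, rfl, hu⟩
  · refine ⟨r, by simpa using hl, (chainVar_cons_ge r s u t).trans hD, fun m => ?_⟩
    refine (edist_chain_head h hu m).trans (ENNReal.ofReal_le_ofReal ?_)
    exact le_mul_of_one_le_left (by positivity) hg
  · rw [chainVar_append] at hD
    refine ⟨l₁ ++ p :: r, ?_, ?_, fun m => ?_⟩
    · simp only [List.length_append, List.length_cons] at hl ⊢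
      omega
    · rw [chainVar_append]
      linarith [chainVar_cons_ge r p u t]
    · rw [chainMap_append, chainMap_append, ENNReal.ofReal_mul (by linarith)]
      refine (edist_chainMap_le h (D := D) ?_ _ _).trans ?_
      · linarith [chainVar_nonneg (u :: r) p t]
      · gcongr
        exact edist_chain_head h hu m

lemma edist_chain_le (h : IsLocalApproxFlow μ ε n a b C f g) {D s t : ℝ} (k : ℕ) {l : List ℝ}
    (hl : l.length = k) (hD : chainVar l s t ≤ D) (m : M t) :
    edist (μ s t m) (chainMap μ l s t m) ≤
      ENNReal.ofReal (g D * (∑ i, C i) * (2 * D) ^ (1 + ε) *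
        ∑ j ∈ Finset.range k, ((j : ℝ) + 1) ^ (-(1 + ε))) := by
  have hD0 : 0 ≤ D := (chainVar_nonneg l s t).trans hD
  have hg : 1 ≤ g D := h.g_ge_one D hD0
  have hC : 0 ≤ ∑ i, C i := Finset.sum_nonneg fun i _ => (h.C_pos i).le
  induction k generalizing l with
  | zero =>
    obtain rfl := List.length_eq_zero_iff.mp hl
    simp [chainMap]
  | succ k ih =>
    obtain ⟨l', hl', hD', hm⟩ := exists_remove h hl hD
    refine (edist_triangle _ (chainMap μ l' s t m) _).trans
      ((add_le_add (ih hl' hD') (hm m)).trans ?_)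
    rw [← ENNReal.ofReal_add (by positivity) (by positivity), Finset.sum_range_succ,
      Real.div_rpow (by positivity) (by positivity), Real.rpow_neg (by positivity)]
    apply le_of_eq
    congr 1
    rw [mul_add, div_eq_mul_inv]
    simp only [mul_assoc]

end Flow

lemma sum_le_zetaR {ε : ℝ} (hε : 0 < ε) (k : ℕ) :
    ∑ j ∈ Finset.range k, ((j : ℝ) + 1) ^ (-(1 + ε)) ≤ zetaR (1 + ε) := by
  refine Summable.sum_le_tsum _ (fun j _ => by positivity) ?_
  have h := (summable_nat_add_iff 1).mpr (Real.summable_nat_rpow.mpr (by linarith : -(1 + ε) < -1))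
  simpa using h

lemma Subdivision.sum_abs_eq {s t : ℝ} (I : Subdivision s t) :
    ∑ j ∈ Finset.range I.k, |I.pt (j + 1) - I.pt j| = |t - s| := by
  have htel := Finset.sum_range_sub I.pt I.k
  rw [I.first, I.last] at htel
  rcases le_total s t with hst | hst
  · rw [abs_of_nonneg (sub_nonneg.mpr hst), ← htel]
    refine Finset.sum_congr rfl fun j hj => abs_of_nonneg (sub_nonneg.mpr ?_)
    exact I.mono_of_le hst j (j + 1) j.le_succ (Finset.mem_range.mp hj)
  · rw [abs_of_nonpos (sub_nonpos.mpr hst), ← htel, ← Finset.sum_neg_distrib]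
    refine Finset.sum_congr rfl fun j hj => abs_of_nonpos (sub_nonpos.mpr ?_)
    exact I.anti_of_ge hst j (j + 1) j.le_succ (Finset.mem_range.mp hj)

/-- For a local approximate flow, with `K = 2^{1+ε} (Σ_i C_i) ζ(1+ε)`, for all `s, t ∈ ℝ`
and every subdivision `I` of the interval between `s` and `t`,
`d_{st}(μ_{st}, μ^I_{st}) ≤ K · g(|t−s|) · |t−s|^{1+ε}`. -/
theorem stmt4 {M : ℝ → Type*} [∀ t, MetricSpace (M t)] [∀ t, CompleteSpace (M t)]
    (μ : ∀ s t : ℝ, M t → M s) (ε : ℝ) (n : ℕ) (a b C : Fin n → ℝ) (f g : ℝ → ℝ)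
    (h : IsLocalApproxFlow μ ε n a b C f g)
    (K : ℝ) (hK : K = 2 ^ (1 + ε) * (∑ i, C i) * zetaR (1 + ε))
    (s t : ℝ) (I : Subdivision s t) :
    unifDist (μ s t) (I.comp μ) ≤
      ENNReal.ofReal (K * g |t - s| * |t - s| ^ (1 + ε)) := by
  have hε := h.eps_pos
  have hg : 1 ≤ g |t - s| := h.g_ge_one _ (Set.mem_Ici.mpr (abs_nonneg _))
  have hC : 0 ≤ ∑ i, C i := Finset.sum_nonneg fun i _ => (h.C_pos i).le
  refine iSup_le fun m => ?_
  obtain ⟨k, pt, k_pos, rfl, rfl, h_mono, h_anti⟩ := I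
  obtain ⟨k, rfl⟩ := Nat.exists_eq_succ_of_ne_zero k_pos.ne'
  have hV := Subdivision.sum_abs_eq ⟨k + 1, pt, k_pos, rfl, rfl, h_mono, h_anti⟩
  have hm := edist_chain_le h k (l := (List.range k).map fun i => pt (i + 1)) (by simp)
    ((chainVar_map_range pt k).trans hV).le m
  rw [← compAlong_eq_chainMap] at hm
  refine hm.trans (ENNReal.ofReal_le_ofReal ?_)
  rw [hK, Real.mul_rpow (by norm_num) (abs_nonneg _)]
  refine (mul_le_mul_of_nonneg_left (sum_le_zetaR hε k) (by positivity)).trans (le_of_eq ?_)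
  simp only [Nat.succ_eq_add_one]
  ring
end
end

section
/- (Sewing lemma for families of metric spaces.) Let (M_t)_{t∈ℝ} be a family of complete metric spaces and let (μ_{st})_{s,t∈ℝ} be a local approximate flow with data ε > 0, exponents (a_i, b_i), constants C_i, and Lipschitz-control function g. Then there exists a unique local flow (φ_{st})_{s,t∈ℝ} — i.e., a family of continuous maps φ_{st} : M_t → M_s with φ_{ss} = id and φ_{st} = φ_{su} ∘ φ_{ut} for all s, t, u ∈ ℝ — such that d_{st}(φ_{st}, μ_{st}) ≤ C' |t−s|^{1+ε} for all s, t, where one may take C' = 2^{1+ε} g(|t−s|) (Σ_{i=1}^{n} C_i) ζ(1+ε). This flow is obtained as the uniform limit of the compositions μ_{s t_1} ∘ μ_{t_1 t_2} ∘ ⋯ ∘ μ_{t_{k-1} t} as the mesh of the subdivision (s, t_1, …, t_{k-1}, t) tends to zero. Moreover each φ_{st} is a homeomorphism with inverse φ_{ts}, and φ_{st} is Lipschitz with constant g(|t−s|). -/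
/-!
The flow is the limit of the dyadic compositions `dy μ N s t` of `μ` along the subdivision of the
segment from `s` to `t` into `2 ^ N` equal pieces. Bisecting each piece costs one three-point error
of size `(|t - s| / 2 ^ (N + 1)) ^ (1 + ε)`, amplified by at most `g |t - s|` because every
composition of maps `μ` standing to the left is Lipschitz with that constant. There are `2 ^ N`
pieces, so the errors form a geometric series of ratio `2 ^ (-ε)`; by Cauchy condensation its sum is
bounded by `ζ(1 + ε)` with the required factor (`dist_dy_le`). Hence the limit `φ` exists, satisfies
the sewing estimate and is Lipschitz with constant `g |t - s|`.

Bisection gives the flow property only when `u` is the midpoint of `s` and `t`. For three times in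
arbitrary position it is obtained by comparing all dyadic compositions with
one grid of step `δ = B / 2 ^ N` based at a point `o` to the left of the three times, where `B` is a
bound for their distances to `o`. Let `toBase t` be transport from `t` to `o` along this grid. If
`|t - s| ≤ δ`, then `toBase s ∘ μ s t` and `toBase t` differ by a bounded number of three-point
errors, so `toBase s ∘ dy μ N s t` and `toBase t` differ by `O(2 ^ N * δ ^ (1 + ε))`
(`dist_toBase_dy`). Moreover `toBase s` has an approximate left inverse `ofBase s`, obtained by
walking back along the grid: the round trip collapses to the identity from its innermost pair of
steps outwards (`dist_back_forth`). So `dy μ N s u ∘ dy μ N u t` and `dy μ N s t` differ by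
`O(2 ^ (-ε N))`, and the limit is a flow; in particular `φ s t` and `φ t s` are mutually inverse.

Finally, any flow satisfying the sewing estimate is approximated by `μ` along every subdivision at
rate `mesh ^ ε`, by telescoping (`dist_comp_le`). This gives both the convergence as the mesh tends
to zero and uniqueness.
-/

open scoped ENNReal

noncomputable section

/-- A local flow `(φ_{st})` satisfying the sewing estimate
`d_{st}(φ_{st}, μ_{st}) ≤ 2^{1+ε} g(|t−s|) (Σ_i C_i) ζ(1+ε) |t−s|^{1+ε}`. -/
def IsFlowWithEstimate {M : ℝ → Type*} [∀ t, MetricSpace (M t)]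
    (μ φ : ∀ s t : ℝ, M t → M s) (ε : ℝ) (n : ℕ) (C : Fin n → ℝ) (g : ℝ → ℝ) : Prop :=
  (∀ s t, Continuous (φ s t)) ∧
  (∀ s : ℝ, φ s s = id) ∧
  (∀ s t u : ℝ, φ s t = fun x => φ s u (φ u t x)) ∧
  (∀ s t : ℝ, unifDist (φ s t) (μ s t) ≤
    ENNReal.ofReal (2 ^ (1 + ε) * g |t - s| * (∑ i, C i) * zetaR (1 + ε) * |t - s| ^ (1 + ε)))

namespace Sewing

variable {M : ℝ → Type*} {μ : ∀ s t : ℝ, M t → M s}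
  {ε : ℝ} {n : ℕ} {a b C : Fin n → ℝ} {f g : ℝ → ℝ}

/-! ### Chains of maps and their Lipschitz constants -/

/-- `Chain μ s t L F`: the map `F : M t → M s` is a composition of maps `μ` along a finite sequence
of times from `s` to `t` whose total variation is at most `L`. Unlike `compAlong`, the end points
are free indices, so concatenating chains needs no transport along equalities of times. -/
inductive Chain (μ : ∀ s t : ℝ, M t → M s) (s : ℝ) : (t : ℝ) → ℝ → (M t → M s) → Prop
  | nil {L : ℝ} (hL : 0 ≤ L) : Chain μ s s L id
  | snoc {u L : ℝ} {F : M u → M s} (t : ℝ) {L' : ℝ} (hF : Chain μ s u L F)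
      (hL : L + |t - u| ≤ L') : Chain μ s t L' (fun y => F (μ u t y))

lemma Chain.nonneg {s t L : ℝ} {F : M t → M s} (hF : Chain μ s t L F) : 0 ≤ L := by
  induction hF with
  | nil hL => exact hL
  | @snoc u L F t L' hF hL ih => linarith [abs_nonneg (t - u)]

lemma Chain.single {s t L : ℝ} (hL : |t - s| ≤ L) : Chain μ s t L (μ s t) :=
  Chain.snoc t (Chain.nil le_rfl) (by simpa using hL)

lemma Chain.mono {s t L L' : ℝ} {F : M t → M s} (hF : Chain μ s t L F) (hL : L ≤ L') :
    Chain μ s t L' F := by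
  cases hF with
  | nil h => exact Chain.nil (h.trans hL)
  | snoc t hF h => exact Chain.snoc t hF (h.trans hL)

lemma Chain.comp {s u t L L' : ℝ} {F : M u → M s} {G : M t → M u}
    (hF : Chain μ s u L F) (hG : Chain μ u t L' G) :
    Chain μ s t (L + L') (fun y => F (G y)) := by
  induction hG with
  | nil h => exact hF.mono (by linarith)
  | snoc t hG h ih => exact Chain.snoc t ih (by linarith)

lemma castM_snoc {y : ℕ → ℝ} {k : ℕ} {s u t : ℝ} (h0 : y 0 = s) (hk : y k = u)
    (h1 : y (k + 1) = t) :
    castM M h1 h0 (compAlong μ y (k + 1)) =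
      fun m => castM M hk h0 (compAlong μ y k) (μ u t m) := by
  subst h0 hk h1; rfl

/-- Every chain is a `compAlong`. The times are only pinned up to the index `k`, which makes the
induction step a mere change of the value at `k + 1`. -/
lemma Chain.exists_compAlong {s t L : ℝ} {F : M t → M s} (hF : Chain μ s t L F) :
    ∃ (k : ℕ) (x : ℕ → ℝ), ∀ y : ℕ → ℝ, (∀ j ≤ k, y j = x j) →
      ∃ (h0 : y 0 = s) (hk : y k = t), castM M hk h0 (compAlong μ y k) = F ∧
        ∑ j ∈ Finset.range k, |y (j + 1) - y j| ≤ L := by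
  induction hF with
  | nil hL =>
    refine ⟨0, fun _ => s, fun y hy => ?_⟩
    have h0 : y 0 = s := hy 0 le_rfl
    refine ⟨h0, h0, ?_, by simpa using hL⟩
    subst h0; rfl
  | @snoc u L F t L' hF hL ih =>
    obtain ⟨k, x, ih⟩ := ih
    refine ⟨k + 1, fun j => if j ≤ k then x j else t, fun y hy => ?_⟩
    obtain ⟨h0, hk, e, hs⟩ := ih y fun j hj => by simpa [hj] using hy j (by omega)
    have h1 : y (k + 1) = t := by simpa using hy (k + 1) le_rfl
    refine ⟨h0, h1, ?_, ?_⟩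
    · rw [castM_snoc h0 hk h1, e]
    · rw [Finset.sum_range_succ, h1, hk]; linarith

/-! ### Dyadic compositions -/

/-- The composition of the maps `μ` along the subdivision of the segment from `s` to `t` into `2 ^ N`
equal pieces, set up by repeated bisection. -/
def dy (μ : ∀ s t : ℝ, M t → M s) : ℕ → ∀ s t : ℝ, M t → M s
  | 0 => μ
  | N + 1 => fun s t y => dy μ N s ((s + t) / 2) (dy μ N ((s + t) / 2) t y)

lemma abs_mid_left (s t : ℝ) : |(s + t) / 2 - s| = |t - s| / 2 := by
  rw [show (s + t) / 2 - s = (t - s) / 2 by ring, abs_div, abs_two]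

lemma abs_mid_right (s t : ℝ) : |t - (s + t) / 2| = |t - s| / 2 := by
  rw [show t - (s + t) / 2 = (t - s) / 2 by ring, abs_div, abs_two]

lemma dy_chain (N : ℕ) (s t : ℝ) : Chain μ s t |t - s| (dy μ N s t) := by
  induction N generalizing s t with
  | zero => exact Chain.single le_rfl
  | succ N ih =>
    refine ((ih s ((s + t) / 2)).comp (ih ((s + t) / 2) t)).mono ?_
    rw [abs_mid_left, abs_mid_right]; linarith

/-- The composition `μ (x j) (x (j - 1)) ∘ ⋯ ∘ μ (x 1) (x 0)`, which runs through the points of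
`compAlong μ x j` in the opposite direction. -/
def compBack (μ : ∀ s t : ℝ, M t → M s) (x : ℕ → ℝ) : ∀ j : ℕ, M (x 0) → M (x j)
  | 0 => id
  | j + 1 => fun y => μ (x (j + 1)) (x j) (compBack μ x j y)

lemma compAlong_chain {x : ℕ → ℝ} {δ : ℝ} (hx : ∀ j, |x (j + 1) - x j| ≤ δ) (j : ℕ) :
    Chain μ (x 0) (x j) (δ * j) (compAlong μ x j) := by
  induction j with
  | zero => exact Chain.nil (by simp)
  | succ j ih =>
    refine Chain.snoc _ ih ?_
    push_cast
    linarith [hx j]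

lemma compBack_chain {x : ℕ → ℝ} {δ : ℝ} (hx : ∀ j, |x (j + 1) - x j| ≤ δ) (j : ℕ) :
    Chain μ (x j) (x 0) (δ * j) (compBack μ x j) := by
  induction j with
  | zero => exact Chain.nil (by simp)
  | succ j ih =>
    refine ((Chain.single (L := δ) (by rw [abs_sub_comm]; exact hx j)).comp ih).mono ?_
    push_cast
    linarith

variable [∀ t, MetricSpace (M t)]

/-! ### Metric estimates for chains -/

lemma unifDist_le_iff {α β : Type*} [MetricSpace β] {u v : α → β} {c : ℝ} (hc : 0 ≤ c) :
    unifDist u v ≤ ENNReal.ofReal c ↔ ∀ x, dist (u x) (v x) ≤ c := by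
  simp only [unifDist, iSup_le_iff, edist_dist, ENNReal.ofReal_le_ofReal_iff hc]

lemma lipWith_iff {α β : Type*} [MetricSpace α] [MetricSpace β] {K : ℝ} (hK : 0 ≤ K)
    {F : α → β} : LipWith K F ↔ ∀ y y', dist (F y) (F y') ≤ K * dist y y' := by
  simp only [LipWith, edist_dist, ← ENNReal.ofReal_mul hK]
  refine forall₂_congr fun y y' => ENNReal.ofReal_le_ofReal_iff (by positivity)

section

variable (h : IsLocalApproxFlow μ ε n a b C f g)
include h

lemma g_pos {x : ℝ} (hx : 0 ≤ x) : 0 < g x := lt_of_lt_of_le one_pos (h.g_ge_one x hx)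

lemma g_le {x y : ℝ} (hx : 0 ≤ x) (hxy : x ≤ y) : g x ≤ g y :=
  h.g_mono hx (hx.trans hxy) hxy

lemma sum_C_nonneg : 0 ≤ ∑ i, C i := Finset.sum_nonneg fun i _ => (h.C_pos i).le

lemma Chain.dist_le {s t L : ℝ} {F : M t → M s} (hF : Chain μ s t L F) (y y' : M t) :
    dist (F y) (F y') ≤ g L * dist y y' := by
  obtain ⟨k, x, hx⟩ := hF.exists_compAlong
  obtain ⟨h0, hk, e, hs⟩ := hx x fun _ _ => rfl
  have hv : 0 ≤ ∑ j ∈ Finset.range k, |x (j + 1) - x j| :=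
    Finset.sum_nonneg fun _ _ => abs_nonneg _
  have hl := (lipWith_iff (g_pos h hv).le).1 (h.lip_chain k x)
  subst h0 hk e
  exact (hl y y').trans (mul_le_mul_of_nonneg_right (g_le h hv hs) dist_nonneg)

lemma three {s u t δ : ℝ} (h1 : |t - u| ≤ δ) (h2 : |u - s| ≤ δ) (y : M t) :
    dist (μ s t y) (μ s u (μ u t y)) ≤ (∑ i, C i) * δ ^ (1 + ε) := by
  have hδ : 0 ≤ δ := (abs_nonneg _).trans h1
  refine ((unifDist_le_iff (Finset.sum_nonneg fun i _ => ?_)).1 (h.three_point s t u) y).trans ?_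
  · have := (h.C_pos i).le
    positivity
  · rw [Finset.sum_mul]
    refine Finset.sum_le_sum fun i _ => ?_
    have ha := (h.a_pos i).le
    have hb := (h.b_pos i).le
    have hC := (h.C_pos i).le
    rw [← h.ab_eq i, Real.rpow_add_of_nonneg hδ ha hb, mul_assoc]
    gcongr

lemma Chain.three {p s u t L B δ : ℝ} {F : M s → M p} (hF : Chain μ p s L F) (hB : L ≤ B)
    (h1 : |t - u| ≤ δ) (h2 : |u - s| ≤ δ) (y : M t) :
    dist (F (μ s t y)) (F (μ s u (μ u t y))) ≤ g B * ((∑ i, C i) * δ ^ (1 + ε)) :=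
  (Chain.dist_le h (hF.mono hB) _ _).trans
    (mul_le_mul_of_nonneg_left (Sewing.three h h1 h2 y) (g_pos h (hF.nonneg.trans hB)).le)

end

/-! ### The sewing estimate -/

lemma two_pow_mul_rpow {r : ℝ} (hr : 0 ≤ r) (N : ℕ) :
    (2 : ℝ) ^ N * (r / 2 ^ N) ^ (1 + ε) = r ^ (1 + ε) * ((2 : ℝ) ^ (-ε)) ^ N := by
  have h2 : (0 : ℝ) < 2 ^ N := by positivity
  rw [Real.div_rpow hr h2.le, Real.rpow_add h2, Real.rpow_one, Real.rpow_neg zero_le_two, inv_pow,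
    ← Real.rpow_natCast (2 ^ ε) N, ← Real.rpow_mul zero_le_two, ← Real.rpow_natCast 2 N,
    ← Real.rpow_mul zero_le_two, mul_comm ε]
  have : (0 : ℝ) < 2 ^ ((N : ℝ) * ε) := by positivity
  have : (0 : ℝ) < 2 ^ (N : ℝ) := by positivity
  field_simp

/-- The prefix `F` makes the bound stable under bisection: the left half of the composition becomes
part of the prefix while the right half is being refined. -/
lemma dist_dy_succ (h : IsLocalApproxFlow μ ε n a b C f g) (N : ℕ) {p s L : ℝ} (t : ℝ)
    {F : M s → M p} (hF : Chain μ p s L F) (y : M t) :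
    dist (F (dy μ N s t y)) (F (dy μ (N + 1) s t y)) ≤
      g (L + |t - s|) * ((∑ i, C i) * (2 ^ N * (|t - s| / 2 / 2 ^ N) ^ (1 + ε))) := by
  induction N generalizing s t L with
  | zero =>
    have := Chain.three h hF (B := L + |t - s|) (by linarith [abs_nonneg (t - s)])
      (abs_mid_right s t).le (abs_mid_left s t).le y
    simpa [dy] using this
  | succ N ih =>
    have h1 := ih t (hF.comp (dy_chain N s ((s + t) / 2))) y
    have h2 := ih _ hF (dy μ (N + 1) ((s + t) / 2) t y)
    rw [abs_mid_left] at h1 h2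
    rw [abs_mid_right] at h1
    have hA := sum_C_nonneg h
    have h0 : 0 ≤ |t - s| := abs_nonneg _
    have hg : g (L + |t - s| / 2) ≤ g (L + |t - s|) :=
      g_le h (by linarith [hF.nonneg]) (by linarith)
    have h3 := h2.trans (mul_le_mul_of_nonneg_right hg (by positivity))
    rw [show L + |t - s| / 2 + |t - s| / 2 = L + |t - s| by ring] at h1
    refine (dist_triangle _ _ _).trans ((add_le_add h1 h3).trans (le_of_eq ?_))
    rw [show |t - s| / 2 / 2 ^ (N + 1) = |t - s| / 2 / 2 / 2 ^ N by rw [pow_succ]; field_simp]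
    ring

lemma dist_dy_succ' (h : IsLocalApproxFlow μ ε n a b C f g) (N : ℕ) (s t : ℝ) (y : M t) :
    dist (dy μ N s t y) (dy μ (N + 1) s t y) ≤
      g |t - s| * ((∑ i, C i) * (|t - s| / 2) ^ (1 + ε)) * ((2 : ℝ) ^ (-ε)) ^ N := by
  have := dist_dy_succ h N t (Chain.nil (μ := μ) (s := s) le_rfl) y
  rw [zero_add, two_pow_mul_rpow (by positivity)] at this
  simpa [mul_assoc] using this

lemma ratio_lt_one (hε : 0 < ε) : (2 : ℝ) ^ (-ε) < 1 :=
  Real.rpow_lt_one_of_one_lt_of_neg one_lt_two (by linarith)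

lemma exists_lim [∀ t, CompleteSpace (M t)] (h : IsLocalApproxFlow μ ε n a b C f g)
    (s t : ℝ) (y : M t) :
    ∃ z, Filter.Tendsto (fun N => dy μ N s t y) Filter.atTop (nhds z) :=
  cauchySeq_tendsto_of_complete
    (cauchySeq_of_le_geometric _ _ (ratio_lt_one h.eps_pos) fun N => dist_dy_succ' h N s t y)

lemma zeta_summable (hε : 0 < ε) : Summable fun m : ℕ => ((m : ℝ) + 1) ^ (-(1 + ε)) := by
  have := (summable_nat_add_iff 1).2 (Real.summable_nat_rpow.2 (by linarith : -(1 + ε) < -1))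
  simpa using this

lemma zetaR_pos (hε : 0 < ε) : 0 < zetaR (1 + ε) :=
  (zeta_summable hε).tsum_pos (fun _ => by positivity) 0 (by simp)

/-- Cauchy condensation: the dyadic sum `∑ 2 ^ k * (2 ^ k) ^ (-p)` is at most `2 * ζ(p)`. -/
lemma sum_ratio_le (hε : 0 < ε) (N : ℕ) :
    ∑ k ∈ Finset.range N, ((2 : ℝ) ^ (-ε)) ^ k ≤ 2 * zetaR (1 + ε) := by
  set F : ℕ → ℝ := fun m => (m : ℝ) ^ (-(1 + ε)) with hF
  have hFnn : ∀ m, 0 ≤ F m := fun m => by positivity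
  have hcond := Finset.sum_condensed_le (f := F) (fun m n hm hmn => by
    have : (0 : ℝ) < m := by exact_mod_cast (by omega : 0 < m)
    exact Real.rpow_le_rpow_of_nonpos this (by exact_mod_cast hmn) (by linarith)) N
  have hterm : ∀ k : ℕ, 2 ^ k • F (2 ^ k) = ((2 : ℝ) ^ (-ε)) ^ k := fun k => by
    have := two_pow_mul_rpow (ε := ε) zero_le_one k
    rw [Real.one_rpow, one_mul] at this
    rw [← this, nsmul_eq_mul, hF]
    push_cast
    rw [one_div, Real.inv_rpow (by positivity), Real.rpow_neg (by positivity)]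
  have hz : F 1 + ∑ k ∈ Finset.Ico 2 (2 ^ N + 1), F k ≤ zetaR (1 + ε) := by
    have : ∑ k ∈ Finset.range (2 ^ N), ((k : ℝ) + 1) ^ (-(1 + ε)) ≤ zetaR (1 + ε) :=
      (zeta_summable hε).sum_le_tsum _ fun _ _ => by positivity
    refine le_trans (le_of_eq ?_) this
    have e : ∀ k : ℕ, ((k : ℝ) + 1) ^ (-(1 + ε)) = F (1 + k) := fun k => by
      simp [hF, add_comm]
    simp only [e]
    rw [Finset.sum_range_eq_add_Ico _ (by positivity), add_zero,
      Finset.sum_Ico_add]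
  simp only [hterm] at hcond
  rw [Finset.sum_range_succ, nsmul_eq_mul] at hcond
  have : 0 ≤ ((2 : ℝ) ^ (-ε)) ^ N := by positivity
  have := hFnn 1
  push_cast at hcond
  linarith

/-- The sewing bound, uniformly in the depth of the bisection. -/
lemma dist_dy_le (h : IsLocalApproxFlow μ ε n a b C f g) (N : ℕ) (s t : ℝ) (y : M t) :
    dist (dy μ N s t y) (μ s t y) ≤
      2 ^ (1 + ε) * g |t - s| * (∑ i, C i) * zetaR (1 + ε) * |t - s| ^ (1 + ε) := by
  have h1 := dist_le_range_sum_of_dist_le (f := fun N => dy μ N s t y) N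
    fun {k} _ => dist_dy_succ' h k s t y
  rw [dist_comm, ← Finset.mul_sum] at h1
  have hg := (g_pos h (abs_nonneg (t - s))).le
  have hA := sum_C_nonneg h
  have hε := h.eps_pos
  have hz := (zetaR_pos hε).le
  refine h1.trans ((mul_le_mul_of_nonneg_left (sum_ratio_le hε N) (by positivity)).trans ?_)
  rw [Real.div_rpow (abs_nonneg _) zero_le_two]
  have h2 : (2 : ℝ) ≤ 2 ^ (1 + ε) := by
    simpa using Real.rpow_le_rpow_of_exponent_le one_le_two (by linarith : (1 : ℝ) ≤ 1 + ε)
  have h3 : 2 / (2 : ℝ) ^ (1 + ε) ≤ 2 ^ (1 + ε) := by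
    rw [div_le_iff₀ (by positivity)]; nlinarith
  calc _ = 2 / (2 : ℝ) ^ (1 + ε) * (g |t - s| * (∑ i, C i) * zetaR (1 + ε) * |t - s| ^ (1 + ε)) := by
        field_simp
    _ ≤ 2 ^ (1 + ε) * (g |t - s| * (∑ i, C i) * zetaR (1 + ε) * |t - s| ^ (1 + ε)) :=
        mul_le_mul_of_nonneg_right h3 (by positivity)
    _ = _ := by ring

/-! ### Comparison with a grid -/

section

variable (h : IsLocalApproxFlow μ ε n a b C f g) {x : ℕ → ℝ} {δ B : ℝ}
include h

/-- Running back and forth along `j` grid steps is close to the identity: the innermost pair of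
steps is collapsed first, so each of the `j` collapses costs one three-point error. -/
lemma dist_back_forth (hx : ∀ j, |x (j + 1) - x j| ≤ δ) (j : ℕ) {p L : ℝ} {F : M (x j) → M p}
    (hF : Chain μ p (x j) L F) (hB : L + δ * j ≤ B) (y : M (x j)) :
    dist (F (compBack μ x j (compAlong μ x j y))) (F y) ≤
      j * (g B * ((∑ i, C i) * δ ^ (1 + ε))) := by
  induction j generalizing L with
  | zero => simp [compBack, compAlong]
  | succ j ih =>
    have hδ : 0 ≤ δ := (abs_nonneg _).trans (hx j)
    have hx' : |x j - x (j + 1)| ≤ δ := by rw [abs_sub_comm]; exact hx j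
    push_cast at hB
    have h1 := ih (hF.comp (Chain.single hx')) (by linarith) (μ (x j) (x (j + 1)) y)
    have h2 := Chain.three h hF (B := B) (by nlinarith [(Nat.cast_nonneg j : (0 : ℝ) ≤ j)])
      (hx j) hx' y
    rw [h.id_eq, dist_comm] at h2
    refine (dist_triangle _ _ _).trans ((add_le_add h1 h2).trans (le_of_eq ?_))
    push_cast; ring

/-- One step of the comparison: `p` and `q` are the indices of grid points near `s` and `t`. -/
lemma dist_grid_step (hx : ∀ j, |x (j + 1) - x j| ≤ δ) {p q : ℕ} {s t : ℝ}
    (hs : |s - x p| ≤ δ) (ht : |t - x q| ≤ δ) (hst : |t - s| ≤ δ)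
    (hpq : q = p ∨ q = p + 1 ∨ p = q + 1) (hp : δ * p ≤ B) (hq : δ * q ≤ B) (y : M t) :
    dist (compAlong μ x p (μ (x p) s (μ s t y))) (compAlong μ x q (μ (x q) t y)) ≤
      2 * (g B * ((∑ i, C i) * (2 * δ) ^ (1 + ε))) := by
  have hδ : 0 ≤ δ := (abs_nonneg _).trans hst
  have hδ2 : δ ≤ 2 * δ := by linarith
  have h1 := Chain.three h (compAlong_chain hx p) hp (hst.trans hδ2) (hs.trans hδ2) y
  rw [dist_comm] at h1
  have h0 := dist_nonneg.trans h1
  rcases hpq with rfl | rfl | rfl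
  · linarith
  · have h2 := Chain.three h (compAlong_chain hx p) hp (ht.trans hδ2) ((hx p).trans hδ2) y
    refine (dist_triangle _ _ _).trans ((add_le_add h1 h2).trans (le_of_eq ?_))
    ring
  · have e : |t - x (q + 1)| ≤ 2 * δ := by
      rw [abs_le] at *; constructor <;> linarith
    have e' : |x q - x (q + 1)| ≤ 2 * δ := by rw [abs_sub_comm]; exact (hx q).trans hδ2
    have h2 := Chain.three h (compAlong_chain hx q) hq e ((hx q).trans hδ2) y
    rw [dist_comm] at h2
    refine (dist_triangle _ _ _).trans ((add_le_add h1 h2).trans (le_of_eq ?_))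
    ring

end

/-- The grid of step `δ` starting at `o`. -/
def grid (o δ : ℝ) (j : ℕ) : ℝ := o + δ * j

/-- The index of the last point of `grid o δ` that is at most `t`, for `o ≤ t`. -/
def idx (o δ t : ℝ) : ℕ := ⌊(t - o) / δ⌋₊

lemma grid_step {o δ : ℝ} (hδ : 0 < δ) (j : ℕ) : |grid o δ (j + 1) - grid o δ j| ≤ δ := by
  rw [show grid o δ (j + 1) - grid o δ j = δ by simp only [grid]; push_cast; ring, abs_of_pos hδ]

lemma mul_idx_le {o δ t : ℝ} (hδ : 0 < δ) (ht : o ≤ t) : δ * idx o δ t ≤ t - o := by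
  have := Nat.floor_le (div_nonneg (sub_nonneg.2 ht) hδ.le)
  rw [mul_comm]
  exact (le_div_iff₀ hδ).1 this

lemma lt_mul_idx {o δ : ℝ} (t : ℝ) (hδ : 0 < δ) : t - o < δ * (idx o δ t + 1) := by
  have := Nat.lt_floor_add_one ((t - o) / δ)
  rw [mul_comm]
  exact (div_lt_iff₀ hδ).1 this

lemma abs_sub_grid_idx {o δ t : ℝ} (hδ : 0 < δ) (ht : o ≤ t) :
    |t - grid o δ (idx o δ t)| ≤ δ := by
  have h1 := mul_idx_le hδ ht
  have h2 := lt_mul_idx (o := o) t hδ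
  rw [abs_le, grid]
  constructor <;> nlinarith

lemma idx_le_succ {o δ s t : ℝ} (hδ : 0 < δ) (hs : o ≤ s) (hst : s - t ≤ δ) :
    idx o δ s ≤ idx o δ t + 1 := by
  have h1 := mul_idx_le hδ hs
  have h2 := lt_mul_idx (o := o) t hδ
  have h3 : (idx o δ s : ℝ) < idx o δ t + 1 + 1 := by
    by_contra! hc
    nlinarith
  have : idx o δ s < idx o δ t + 1 + 1 := by exact_mod_cast h3
  omega

/-- Transport from time `t` to the origin `o` of the grid of step `δ`, along the grid. -/
def toBase (μ : ∀ s t : ℝ, M t → M s) (o δ t : ℝ) (y : M t) : M (grid o δ 0) :=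
  compAlong μ (grid o δ) (idx o δ t) (μ (grid o δ (idx o δ t)) t y)

/-- Transport along the grid from its origin to time `t`. -/
def ofBase (μ : ∀ s t : ℝ, M t → M s) (o δ t : ℝ) (z : M (grid o δ 0)) : M t :=
  μ t (grid o δ (idx o δ t)) (compBack μ (grid o δ) (idx o δ t) z)

section

variable (h : IsLocalApproxFlow μ ε n a b C f g) {o δ B : ℝ} (hδ : 0 < δ)
include h hδ

/-- Dyadic transport from `t` to `s` followed by grid transport to the base is close to grid
transport from `t` to the base. This holds whatever the relative position of `s` and `t`. -/
lemma dist_toBase_dy (N : ℕ) {s t : ℝ} (hs : o ≤ s) (ht : o ≤ t)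
    (hsB : s ≤ o + B) (htB : t ≤ o + B) (hst : |t - s| ≤ 2 ^ N * δ) (y : M t) :
    dist (toBase μ o δ s (dy μ N s t y)) (toBase μ o δ t y) ≤
      2 ^ N * (2 * (g B * ((∑ i, C i) * (2 * δ) ^ (1 + ε)))) := by
  induction N generalizing s t with
  | zero =>
    rw [pow_zero, one_mul] at *
    have h1 := idx_le_succ (o := o) (s := s) (t := t) hδ hs (by linarith [(abs_le.1 hst).1])
    have h2 := idx_le_succ (o := o) (s := t) (t := s) hδ ht (by linarith [(abs_le.1 hst).2])
    exact dist_grid_step h (grid_step hδ) (abs_sub_grid_idx hδ hs) (abs_sub_grid_idx hδ ht) hst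
      (by omega) (by linarith [mul_idx_le hδ hs]) (by linarith [mul_idx_le hδ ht]) y
  | succ N ih =>
    have e : |t - s| / 2 ≤ 2 ^ N * δ := by rw [pow_succ] at hst; linarith
    have h1 := ih (s := s) (t := (s + t) / 2) hs (by linarith) hsB (by linarith)
      (by rwa [abs_mid_left]) (dy μ N ((s + t) / 2) t y)
    have h2 := ih (s := (s + t) / 2) (t := t) (by linarith) ht (by linarith) htB
      (by rwa [abs_mid_right]) y
    refine (dist_triangle _ _ _).trans ((add_le_add h1 h2).trans (le_of_eq ?_))
    rw [pow_succ]; ring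

lemma dist_ofBase_toBase {s : ℝ} (hs : o ≤ s) (hsB : s ≤ o + B) (hB : δ ≤ B) (z : M s) :
    dist (ofBase μ o δ s (toBase μ o δ s z)) z ≤
      (idx o δ s + 1) * (g (2 * B) * ((∑ i, C i) * δ ^ (1 + ε))) := by
  have hd := abs_sub_grid_idx hδ hs
  have hd' := hd
  rw [abs_sub_comm] at hd'
  have h1 := dist_back_forth h (grid_step hδ) (idx o δ s) (B := 2 * B)
    (Chain.single (μ := μ) (L := δ) hd') (by linarith [mul_idx_le hδ hs])
    (μ (grid o δ (idx o δ s)) s z)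
  have h2 := Chain.three h (Chain.nil (μ := μ) (s := s) le_rfl) (B := 2 * B) (by linarith) hd hd' z
  rw [h.id_eq, dist_comm] at h2
  refine (dist_triangle _ _ _).trans ((add_le_add h1 h2).trans (le_of_eq ?_))
  ring

lemma dist_ofBase_le {s : ℝ} (hs : o ≤ s) (hsB : s ≤ o + B) (hB : δ ≤ B)
    (z z' : M (grid o δ 0)) :
    dist (ofBase μ o δ s z) (ofBase μ o δ s z') ≤ g (2 * B) * dist z z' := by
  have hd := abs_sub_grid_idx hδ hs
  rw [abs_sub_comm] at hd
  have hc := (Chain.single (μ := μ) hd).comp (compBack_chain (μ := μ) (grid_step hδ) (idx o δ s))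
  exact Chain.dist_le h (hc.mono (by linarith [mul_idx_le hδ hs])) z z'

end

/-- Approximate flow property of the dyadic compositions, for three times in any order. Applying
`toBase` to both sides gives the same value up to a small error, and `toBase` has the uniformly
Lipschitz approximate left inverse `ofBase`. -/
lemma dist_dy_comp (h : IsLocalApproxFlow μ ε n a b C f g) {o B : ℝ} (hB : 0 < B) (N : ℕ)
    {s u t : ℝ} (hs : o ≤ s) (hu : o ≤ u) (ht : o ≤ t) (hsB : s ≤ o + B) (huB : u ≤ o + B)
    (htB : t ≤ o + B) (y : M t) :
    dist (dy μ N s u (dy μ N u t y)) (dy μ N s t y) ≤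
      (6 * g (2 * B) * g B + 4 * g (2 * B)) * (∑ i, C i) * (2 * B) ^ (1 + ε) *
        ((2 : ℝ) ^ (-ε)) ^ N := by
  have hN : (1 : ℝ) ≤ 2 ^ N := one_le_pow₀ one_le_two
  obtain ⟨δ, hδe⟩ : ∃ δ, δ = B / 2 ^ N := ⟨_, rfl⟩
  have hδ : 0 < δ := by rw [hδe]; positivity
  have hδB : δ ≤ B := by rw [hδe]; exact div_le_self hB.le hN
  have hBδ : 2 ^ N * δ = B := by rw [hδe]; field_simp
  have key : (2 : ℝ) ^ N * (2 * δ) ^ (1 + ε) = (2 * B) ^ (1 + ε) * ((2 : ℝ) ^ (-ε)) ^ N := by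
    rw [← two_pow_mul_rpow (by positivity), hδe, mul_div_assoc]
  have habs : ∀ {v w : ℝ}, o ≤ v → o ≤ w → v ≤ o + B → w ≤ o + B → |w - v| ≤ 2 ^ N * δ := by
    intro v w h1 h2 h3 h4
    rw [hBδ, abs_le]; constructor <;> linarith
  set z := dy μ N s u (dy μ N u t y)
  set z' := dy μ N s t y
  set E := (∑ i, C i) * (2 * δ) ^ (1 + ε) with hE
  have hA := sum_C_nonneg h
  have hE0 : 0 ≤ E := by positivity
  have hg := g_pos h (x := 2 * B) (by positivity)
  have h1 := dist_toBase_dy h hδ N hs hu hsB huB (habs hs hu hsB huB) (dy μ N u t y)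
  have h2 := dist_toBase_dy h hδ N hu ht huB htB (habs hu ht huB htB) y
  have h3 := dist_toBase_dy h hδ N hs ht hsB htB (habs hs ht hsB htB) y
  have h4 : dist (toBase μ o δ s z) (toBase μ o δ s z') ≤ 3 * (2 ^ N * (2 * (g B * E))) := by
    rw [dist_comm] at h3
    linarith [dist_triangle (toBase μ o δ s z) (toBase μ o δ u (dy μ N u t y))
      (toBase μ o δ s z'), dist_triangle (toBase μ o δ u (dy μ N u t y)) (toBase μ o δ t y)
      (toBase μ o δ s z')]
  have h5 := (dist_ofBase_le h hδ hs hsB hδB (toBase μ o δ s z) (toBase μ o δ s z')).trans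
    (mul_le_mul_of_nonneg_left h4 hg.le)
  have hε := h.eps_pos
  have hret : ∀ w : M s, dist (ofBase μ o δ s (toBase μ o δ s w)) w ≤
      2 * 2 ^ N * (g (2 * B) * E) := by
    intro w
    have hi : (idx o δ s : ℝ) ≤ 2 ^ N := by
      have := mul_idx_le hδ hs
      by_contra! hc
      nlinarith
    refine (dist_ofBase_toBase h hδ hs hsB hδB w).trans ?_
    have : δ ^ (1 + ε) ≤ (2 * δ) ^ (1 + ε) := by gcongr; linarith
    rw [hE]
    gcongr
    linarith
  have h6 := hret z
  have h7 := hret z'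
  rw [dist_comm] at h6
  have h8 : dist z z' ≤ (6 * g (2 * B) * g B + 4 * g (2 * B)) * (2 ^ N * E) := by
    linarith [dist_triangle z (ofBase μ o δ s (toBase μ o δ s z)) z', dist_triangle
      (ofBase μ o δ s (toBase μ o δ s z)) (ofBase μ o δ s (toBase μ o δ s z')) z']
  refine h8.trans (le_of_eq ?_)
  calc _ = (6 * g (2 * B) * g B + 4 * g (2 * B)) * (∑ i, C i) * (2 ^ N * (2 * δ) ^ (1 + ε)) := by
        rw [hE]; ring
    _ = _ := by rw [key]; ring

/-! ### Flows close to `μ` along subdivisions -/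

/-- Telescoping: replacing the maps `ψ` by the maps `μ` one after the other, starting from the end
of the chain, only uses Lipschitz bounds for compositions of `μ`. -/
lemma dist_compAlong_le (h : IsLocalApproxFlow μ ε n a b C f g) {ψ : ∀ s t : ℝ, M t → M s}
    (hid : ∀ s, ψ s s = id) (hflow : ∀ s t u, ψ s t = fun y => ψ s u (ψ u t y))
    (x : ℕ → ℝ) (e : ℕ → ℝ) (k : ℕ) {B : ℝ}
    (hB : ∑ j ∈ Finset.range k, |x (j + 1) - x j| ≤ B)
    (he : ∀ j < k, ∀ y, dist (ψ (x j) (x (j + 1)) y) (μ (x j) (x (j + 1)) y) ≤ e j)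
    (y : M (x k)) :
    dist (compAlong μ x k y) (ψ (x 0) (x k) y) ≤ g B * ∑ j ∈ Finset.range k, e j := by
  induction k with
  | zero => simp [compAlong, hid]
  | succ k ih =>
    have hv : 0 ≤ ∑ j ∈ Finset.range k, |x (j + 1) - x j| :=
      Finset.sum_nonneg fun _ _ => abs_nonneg _
    rw [Finset.sum_range_succ] at hB
    have hB' : ∑ j ∈ Finset.range k, |x (j + 1) - x j| ≤ B := by
      linarith [abs_nonneg (x (k + 1) - x k)]
    have h1 := ih hB' (fun j hj => he j (by omega)) (ψ (x k) (x (k + 1)) y)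
    have h2 := (lipWith_iff (g_pos h hv).le).1 (h.lip_chain k x) (μ (x k) (x (k + 1)) y)
      (ψ (x k) (x (k + 1)) y)
    have h3 := he k (by omega) y
    rw [dist_comm] at h3
    have h4 := h2.trans (mul_le_mul (g_le h hv hB') h3 dist_nonneg (g_pos h (hv.trans hB')).le)
    rw [hflow (x 0) (x (k + 1)) (x k), Finset.sum_range_succ]
    refine (dist_triangle _ _ _).trans ((add_le_add h4 h1).trans (le_of_eq ?_))
    ring

lemma subdivision_sum {s t : ℝ} (I : Subdivision s t) :
    ∑ j ∈ Finset.range I.k, |I.pt (j + 1) - I.pt j| = |t - s| := by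
  have tel : ∑ j ∈ Finset.range I.k, (I.pt (j + 1) - I.pt j) = t - s := by
    rw [Finset.sum_range_sub, I.last, I.first]
  rcases le_total s t with hst | hst
  · rw [abs_of_nonneg (by linarith), ← tel]
    refine Finset.sum_congr rfl fun j hj => abs_of_nonneg ?_
    have := I.mono_of_le hst j (j + 1) (by omega) (by simpa using hj)
    linarith
  · rw [abs_of_nonpos (by linarith), ← tel, ← Finset.sum_neg_distrib]
    refine Finset.sum_congr rfl fun j hj => abs_of_nonpos ?_
    have := I.anti_of_ge hst j (j + 1) (by omega) (by simpa using hj)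
    linarith

lemma le_mesh {s t : ℝ} (I : Subdivision s t) {j : ℕ} (hj : j < I.k) :
    |I.pt (j + 1) - I.pt j| ≤ I.mesh :=
  le_ciSup (f := fun j : Fin I.k => |I.pt (j.1 + 1) - I.pt j.1|) (Set.finite_range _).bddAbove
    ⟨j, hj⟩

lemma mesh_nonneg {s t : ℝ} (I : Subdivision s t) : 0 ≤ I.mesh :=
  (abs_nonneg _).trans (le_mesh I I.k_pos)

/-- A flow satisfying the sewing estimate is the limit of the compositions of `μ` along
subdivisions, at rate `mesh ^ ε`. -/
lemma dist_comp_le (h : IsLocalApproxFlow μ ε n a b C f g) {ψ : ∀ s t : ℝ, M t → M s}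
    (hψ : IsFlowWithEstimate μ ψ ε n C g) {s t : ℝ} (I : Subdivision s t) (y : M t) :
    dist (I.comp μ y) (ψ s t y) ≤
      g |t - s| * (2 ^ (1 + ε) * g |t - s| * (∑ i, C i) * zetaR (1 + ε) * |t - s|) *
        I.mesh ^ ε := by
  obtain ⟨-, hid, hflow, hest⟩ := hψ
  have hε := h.eps_pos
  have hA := sum_C_nonneg h
  have hz := (zetaR_pos hε).le
  have hg := (g_pos h (abs_nonneg (t - s))).le
  have hm := mesh_nonneg I
  have hsum := subdivision_sum I
  set K := 2 ^ (1 + ε) * g |t - s| * (∑ i, C i) * zetaR (1 + ε) with hK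
  have hK0 : 0 ≤ K := by positivity
  have main : ∀ y : M (I.pt I.k), dist (compAlong μ I.pt I.k y) (ψ (I.pt 0) (I.pt I.k) y) ≤
      g |t - s| * ∑ j ∈ Finset.range I.k, K * I.mesh ^ ε * |I.pt (j + 1) - I.pt j| := by
    refine dist_compAlong_le h hid hflow I.pt _ I.k hsum.le fun j hj y => ?_
    have hd0 : 0 ≤ |I.pt (j + 1) - I.pt j| := abs_nonneg _
    have hgj := (g_pos h hd0).le
    refine ((unifDist_le_iff (by positivity)).1 (hest (I.pt j) (I.pt (j + 1))) y).trans ?_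
    have hle : |I.pt (j + 1) - I.pt j| ≤ |t - s| := by
      rw [← hsum]
      exact Finset.single_le_sum (f := fun j => |I.pt (j + 1) - I.pt j|)
        (fun _ _ => abs_nonneg _) (Finset.mem_range.2 hj)
    have hgle := g_le h hd0 hle
    have hpow : |I.pt (j + 1) - I.pt j| ^ (1 + ε) ≤ I.mesh ^ ε * |I.pt (j + 1) - I.pt j| := by
      rw [Real.rpow_add_of_nonneg hd0 zero_le_one hε.le, Real.rpow_one, mul_comm]
      gcongr
      exact le_mesh I hj
    rw [hK, mul_assoc _ (I.mesh ^ ε)]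
    gcongr
  rw [← Finset.mul_sum, hsum] at main
  have tr : dist (I.comp μ y) (ψ s t y) ≤ g |t - s| * (K * I.mesh ^ ε * |t - s|) := by
    clear_value K
    clear hest hsum
    obtain ⟨k, pt, hk, rfl, rfl, h1, h2⟩ := I
    exact main y
  exact tr.trans (le_of_eq (by ring))

/-- The subdivision into `k + 1` pieces of equal length. -/
def uniformSubdivision (s t : ℝ) (k : ℕ) : Subdivision s t where
  k := k + 1
  pt j := s + (t - s) * (j / ((k + 1 : ℕ) : ℝ))
  k_pos := by omega
  first := by simp
  last := by rw [div_self (by positivity)]; ring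
  mono_of_le hst i j hij _ := by
    have : (i : ℝ) / ((k + 1 : ℕ) : ℝ) ≤ j / ((k + 1 : ℕ) : ℝ) := by gcongr
    nlinarith
  anti_of_ge hst i j hij _ := by
    have : (i : ℝ) / ((k + 1 : ℕ) : ℝ) ≤ j / ((k + 1 : ℕ) : ℝ) := by gcongr
    nlinarith

lemma mesh_uniform (s t : ℝ) (k : ℕ) :
    (uniformSubdivision s t k).mesh ≤ |t - s| / ((k + 1 : ℕ) : ℝ) := by
  have : Nonempty (Fin (uniformSubdivision s t k).k) := ⟨⟨0, (uniformSubdivision s t k).k_pos⟩⟩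
  refine ciSup_le fun j => le_of_eq ?_
  have hk : (0 : ℝ) < ((k + 1 : ℕ) : ℝ) := by positivity
  rw [show |t - s| / ((k + 1 : ℕ) : ℝ) = |(t - s) / ((k + 1 : ℕ) : ℝ)| by
    rw [abs_div, abs_of_pos hk]]
  congr 1
  simp only [uniformSubdivision]
  rw [Nat.cast_add j.1 1]
  field_simp
  push_cast
  ring

lemma tendsto_mesh_uniform {ε : ℝ} (hε : 0 < ε) (s t : ℝ) :
    Filter.Tendsto (fun k => (uniformSubdivision s t k).mesh ^ ε) Filter.atTop (nhds 0) := by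
  have h1 : Filter.Tendsto (fun k : ℕ => |t - s| / ((k + 1 : ℕ) : ℝ)) Filter.atTop (nhds 0) :=
    (tendsto_const_div_atTop_nhds_zero_nat |t - s|).comp (Filter.tendsto_add_atTop_nat 1)
  have h2 := squeeze_zero (fun k => mesh_nonneg _) (mesh_uniform s t) h1
  have := h2.rpow_const (p := ε) (Or.inr hε.le)
  rwa [Real.zero_rpow hε.ne'] at this

lemma flow_unique (h : IsLocalApproxFlow μ ε n a b C f g) {φ ψ : ∀ s t : ℝ, M t → M s}
    (hφ : IsFlowWithEstimate μ φ ε n C g) (hψ : IsFlowWithEstimate μ ψ ε n C g) : ψ = φ := by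
  funext s t y
  have lim : ∀ {χ : ∀ s t : ℝ, M t → M s}, IsFlowWithEstimate μ χ ε n C g →
      Filter.Tendsto (fun k => (uniformSubdivision s t k).comp μ y) Filter.atTop
        (nhds (χ s t y)) := fun hχ => by
    rw [tendsto_iff_dist_tendsto_zero]
    refine squeeze_zero (fun _ => dist_nonneg) (fun k => dist_comp_le h hχ _ y) ?_
    simpa using (tendsto_mesh_uniform h.eps_pos s t).const_mul _
  exact tendsto_nhds_unique (lim hψ) (lim hφ)

/-! ### The limit flow -/

lemma exists_flow [∀ t, CompleteSpace (M t)] (h : IsLocalApproxFlow μ ε n a b C f g) :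
    ∃ φ : ∀ s t : ℝ, M t → M s, IsFlowWithEstimate μ φ ε n C g ∧
      ∀ s t, LipWith (g |t - s|) (φ s t) := by
  choose φ hφ using fun s t y => exists_lim h s t y
  have hg : ∀ s t : ℝ, 0 ≤ g |t - s| := fun s t => (g_pos h (abs_nonneg _)).le
  have hε := h.eps_pos
  have hA := sum_C_nonneg h
  have hz := (zetaR_pos hε).le
  have hlip : ∀ s t y y', dist (φ s t y) (φ s t y') ≤ g |t - s| * dist y y' := fun s t y y' =>
    le_of_tendsto ((hφ s t y).dist (hφ s t y'))
      (Filter.Eventually.of_forall fun N => Chain.dist_le h (dy_chain N s t) y y')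
  refine ⟨φ, ⟨fun s t => ?_, fun s => ?_, fun s t u => ?_, fun s t => ?_⟩, fun s t => ?_⟩
  · exact (LipschitzWith.of_dist_le_mul (K := ⟨g |t - s|, hg s t⟩) (hlip s t)).continuous
  · funext y
    have hdy : ∀ N, dy μ N s s = id := fun N => by
      induction N with
      | zero => exact h.id_eq s
      | succ N ih =>
        have e : (s + s) / 2 = s := by ring
        funext y
        simp only [dy]
        rw [e, ih]; rfl
    refine tendsto_nhds_unique (hφ s s y) ?_
    simp [hdy]
  · funext y
    -- `o` lies below the three times, and all of them are within `B` of it.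
    set o := min s (min u t) with ho
    set B := max s (max u t) - o + 1 with hB
    have h1 : o ≤ s := min_le_left _ _
    have h2 : o ≤ u := (min_le_right _ _).trans (min_le_left _ _)
    have h3 : o ≤ t := (min_le_right _ _).trans (min_le_right _ _)
    have h4 : s ≤ max s (max u t) := le_max_left _ _
    have h5 : u ≤ max s (max u t) := (le_max_left _ _).trans (le_max_right _ _)
    have h6 : t ≤ max s (max u t) := (le_max_right _ _).trans (le_max_right _ _)
    have hd : Filter.Tendsto (fun N => dist (dy μ N s u (dy μ N u t y)) (dy μ N s t y))
        Filter.atTop (nhds 0) := by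
      refine squeeze_zero (fun _ => dist_nonneg) (fun N => dist_dy_comp h (o := o) (B := B)
        (by linarith) N h1 h2 h3 (by linarith) (by linarith) (by linarith) y) ?_
      simpa using (tendsto_pow_atTop_nhds_zero_of_lt_one (by positivity)
        (ratio_lt_one hε)).const_mul _
    have hc : Filter.Tendsto (fun N => dy μ N s u (dy μ N u t y)) Filter.atTop
        (nhds (φ s u (φ u t y))) := by
      rw [tendsto_iff_dist_tendsto_zero]
      have e1 := tendsto_iff_dist_tendsto_zero.1 (hφ s u (φ u t y))
      have e2 := (tendsto_iff_dist_tendsto_zero.1 (hφ u t y)).const_mul (g |u - s|)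
      refine squeeze_zero (fun _ => dist_nonneg) (fun N => ?_) (by simpa using e2.add e1)
      exact (dist_triangle _ (dy μ N s u (φ u t y)) _).trans
        (add_le_add_left (Chain.dist_le h (dy_chain N s u) _ _) _)
    exact (dist_eq_zero.1 (tendsto_nhds_unique (hc.dist (hφ s t y)) hd)).symm
  · have := hg s t
    refine (unifDist_le_iff (by positivity)).2 fun y => ?_
    exact le_of_tendsto ((hφ s t y).dist tendsto_const_nhds)
      (Filter.Eventually.of_forall fun N => dist_dy_le h N s t y)
  · exact (lipWith_iff (hg s t)).2 (hlip s t)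

end Sewing

/-- Sewing lemma for families of metric spaces: a local approximate flow `(μ_{st})`
determines a unique local flow `(φ_{st})` (continuous maps with `φ_{ss} = id` and
`φ_{st} = φ_{su} ∘ φ_{ut}`) such that
`d_{st}(φ_{st}, μ_{st}) ≤ 2^{1+ε} g(|t−s|) (Σ_i C_i) ζ(1+ε) |t−s|^{1+ε}`; it is the
uniform limit of the compositions `μ^I_{st}` as `mesh I → 0`, each `φ_{st}` is a
homeomorphism with inverse `φ_{ts}`, and `φ_{st}` is Lipschitz with constant `g(|t−s|)`. -/
theorem stmt8 {M : ℝ → Type*} [∀ t, MetricSpace (M t)] [∀ t, CompleteSpace (M t)]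
    (μ : ∀ s t : ℝ, M t → M s) (ε : ℝ) (n : ℕ) (a b C : Fin n → ℝ) (f g : ℝ → ℝ)
    (h : IsLocalApproxFlow μ ε n a b C f g) :
    ∃ φ : ∀ s t : ℝ, M t → M s,
      IsFlowWithEstimate μ φ ε n C g ∧
      (∀ ψ : ∀ s t : ℝ, M t → M s, IsFlowWithEstimate μ ψ ε n C g → ψ = φ) ∧
      (∀ s t : ℝ, ∀ η : ℝ≥0∞, 0 < η → ∃ δ > (0 : ℝ), ∀ I : Subdivision s t,
        I.mesh < δ → unifDist (I.comp μ) (φ s t) < η) ∧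
      (∀ s t : ℝ, Function.LeftInverse (φ t s) (φ s t) ∧
        Function.RightInverse (φ t s) (φ s t)) ∧
      (∀ s t : ℝ, LipWith (g |t - s|) (φ s t)) := by
  obtain ⟨φ, hφ, hlip⟩ := Sewing.exists_flow h
  refine ⟨φ, hφ, fun ψ hψ => Sewing.flow_unique h hφ hψ, fun s t η hη => ?_, fun s t => ?_, hlip⟩
  -- A real bound `c` strictly between `0` and `η` serves as target accuracy, also when `η = ∞`.
  · obtain ⟨c, hc0, hcη⟩ := ENNReal.lt_iff_exists_nnreal_btwn.1 hη
    have hc : (0 : ℝ) < c := by exact_mod_cast hc0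
    set K := g |t - s| * (2 ^ (1 + ε) * g |t - s| * (∑ i, C i) * zetaR (1 + ε) * |t - s|)
    have hK : 0 ≤ K := by
      have := (Sewing.g_pos h (abs_nonneg (t - s))).le
      have := Sewing.sum_C_nonneg h
      have := (Sewing.zetaR_pos h.eps_pos).le
      positivity
    refine ⟨(c / (K + 1)) ^ ε⁻¹, by positivity, fun I hI => ?_⟩
    have hm : I.mesh ^ ε ≤ c / (K + 1) := by
      rw [← Real.rpow_inv_rpow (by positivity : 0 ≤ c / (K + 1)) h.eps_pos.ne']
      exact Real.rpow_le_rpow (Sewing.mesh_nonneg I) hI.le h.eps_pos.le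
    refine lt_of_le_of_lt ?_ hcη
    rw [← ENNReal.ofReal_coe_nnreal, Sewing.unifDist_le_iff hc.le]
    intro y
    refine (Sewing.dist_comp_le h hφ I y).trans
      ((mul_le_mul_of_nonneg_left hm hK).trans ?_)
    rw [mul_div_assoc', div_le_iff₀ (by positivity)]
    nlinarith
  · obtain ⟨-, hid, hflow, -⟩ := hφ
    have inv : ∀ s t : ℝ, Function.LeftInverse (φ t s) (φ s t) := fun s t y => by
      have := congrFun (hflow t t s) y
      rw [hid] at this
      exact this.symm
    exact ⟨inv s t, inv t s⟩
end
end

section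
/- Let (M_t)_{t∈ℝ} be a family of complete metric spaces and let (μ_{st})_{s,t∈ℝ} be a local approximate flow with data ε > 0, exponents (a_i, b_i), constants C_i, and Lipschitz-control function g. Fix s, t ∈ ℝ and an integer k ≥ 1, let I_k = (t_0, …, t_k) be the regular subdivision t_j = s + j(t−s)/k, and let \overline{I_k} be the reversed subdivision of the interval between t and s. Then d_{ss}(μ^{I_k}_{st} ∘ μ^{\overline{I_k}}_{ts}, id_{M_s}) ≤ g(|t−s|) · k · (Σ_{i=1}^{n} C_i) · (|t−s|/k)^{1+ε}. -/
/-!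
Retracing one step of the subdivision is almost the identity: by the three-point estimate with
equal endpoints and `μ_{tt} = id`, the map `μ_{t_j t_{j+1}} ∘ μ_{t_{j+1} t_j}` is within
`(∑ C_i) δ^{1+ε}` of the identity, where `δ = |t - s| / k`. With `A_j` the map that goes out from
`t_0` to `t_j` and comes back along the same points, `A_{j+1}` differs from `A_j` only by one
such retraced step inserted under `μ_{t_0 t_1} ∘ ⋯ ∘ μ_{t_{j-1} t_j}`, which is Lipschitz with
constant at most `g |t - s|` (`edist_forward_backAlong_le`). Summing over the `k` steps gives
the bound. The rest is transport along equalities of base points: the outgoing map `backAlong`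
follows the points of `u`, while the statement uses the separate sequence `v`, and the two agree
up to heterogeneous equality (`compAlong_heq_backAlong`).
-/

open scoped ENNReal

noncomputable section

/-- The composition `μ (x k) (x (k-1)) ∘ ⋯ ∘ μ (x 1) (x 0)`, i.e. the composition along the
reversed chain, indexed by the points of `x` itself so that it grows on the left. -/
def backAlong {P : Type*} {M : P → Type*} (μ : ∀ x y : P, M y → M x) (x : ℕ → P) :
    ∀ k : ℕ, M (x 0) → M (x k)
  | 0 => id
  | k+1 => fun m => μ (x (k+1)) (x k) (backAlong μ x k m)

lemma heq_apply_of_heq {P : Type*} {M : P → Type*} (μ : ∀ x y : P, M y → M x)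
    {p p' q q' : P} (hp : p = p') (hq : q = q') {m : M q} {m' : M q'} (hm : m ≍ m') :
    μ p q m ≍ μ p' q' m' := by
  subst hp hq
  rw [eq_of_heq hm]

/-- If `v` is the reversal of `u` on `0, …, k`, the first `j` steps of the chain `v`, applied to
the result of the first `i = k - j` steps away from `u 0`, complete the reversed chain. -/
lemma compAlong_heq_backAlong {P : Type*} {M : P → Type*} (μ : ∀ x y : P, M y → M x)
    (u v : ℕ → P) (k : ℕ) (huv : ∀ i j, i + j = k → v j = u i) (m : M (u 0)) :
    ∀ (j i : ℕ), i + j = k → ∀ x : M (v j), x ≍ backAlong μ u i m →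
      compAlong μ v j x ≍ backAlong μ u k m := by
  intro j
  induction j with
  | zero =>
    intro i hij x hx
    obtain rfl : i = k := hij
    exact hx
  | succ j ih =>
    intro i hij x hx
    exact ih (i + 1) (by omega) _
      (heq_apply_of_heq μ (huv _ _ (by omega)) (huv _ _ hij) hx)

/-- Going out along `u 0, …, u j` and back moves each point by at most `j` times `L K`, if each
retraced step moves points by at most `K` and the return maps are `L`-Lipschitz. -/
lemma edist_forward_backAlong_le {P : Type*} {M : P → Type*} [∀ p, MetricSpace (M p)]
    (μ : ∀ x y : P, M y → M x) (u : ℕ → P) (k : ℕ) (L K : ℝ≥0∞)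
    (hL : ∀ j < k, ∀ y y', edist (compAlong μ u j y) (compAlong μ u j y') ≤ L * edist y y')
    (hK : ∀ j < k, ∀ y, edist (μ (u j) (u (j + 1)) (μ (u (j + 1)) (u j) y)) y ≤ K)
    (m : M (u 0)) :
    ∀ j ≤ k, edist (compAlong μ u j (backAlong μ u j m)) m ≤ j * (L * K) := by
  intro j
  induction j with
  | zero => intro _; simp [compAlong, backAlong]
  | succ j ih =>
    intro hj
    calc edist (compAlong μ u (j + 1) (backAlong μ u (j + 1) m)) m
        ≤ edist (compAlong μ u (j + 1) (backAlong μ u (j + 1) m))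
            (compAlong μ u j (backAlong μ u j m))
          + edist (compAlong μ u j (backAlong μ u j m)) m := edist_triangle _ _ _
      _ ≤ L * K + j * (L * K) :=
        add_le_add ((hL j hj _ _).trans (mul_le_mul_right (hK j hj _) L)) (ih (by omega))
      _ = ((j + 1 : ℕ) : ℝ≥0∞) * (L * K) := by push_cast; ring

/-- The three-point estimate with both endpoints equal to `p`, where `μ p p = id`. -/
lemma IsLocalApproxFlow.edist_retrace_le {M : ℝ → Type*} [∀ t, MetricSpace (M t)]
    {μ : ∀ s t : ℝ, M t → M s} {ε : ℝ} {n : ℕ} {a b C : Fin n → ℝ} {f g : ℝ → ℝ}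
    (h : IsLocalApproxFlow μ ε n a b C f g) (p q : ℝ) (y : M p) :
    edist (μ p q (μ q p y)) y ≤ ENNReal.ofReal ((∑ i, C i) * |q - p| ^ (1 + ε)) := by
  have h1 := (le_iSup (fun x => edist (μ p p x) (μ p q (μ q p x))) y).trans
    (h.three_point p p q)
  rw [h.id_eq] at h1
  rw [edist_comm]
  refine h1.trans_eq ?_
  congr 1
  rw [Finset.sum_mul]
  refine Finset.sum_congr rfl fun i _ => ?_
  rw [abs_sub_comm p q, mul_assoc, ← Real.rpow_add_of_nonneg (abs_nonneg _) (h.a_pos i).le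
    (h.b_pos i).le, h.ab_eq]

/-- For a local approximate flow, the regular subdivision `t_j = s + j(t−s)/k` and its
reverse satisfy
`d_{ss}(μ^{I_k}_{st} ∘ μ^{\overline{I_k}}_{ts}, id) ≤ g(|t−s|) · k · (Σ_i C_i) · (|t−s|/k)^{1+ε}`. -/
theorem stmt9 {M : ℝ → Type*} [∀ t, MetricSpace (M t)] [∀ t, CompleteSpace (M t)]
    (μ : ∀ s t : ℝ, M t → M s) (ε : ℝ) (n : ℕ) (a b C : Fin n → ℝ) (f g : ℝ → ℝ)
    (h : IsLocalApproxFlow μ ε n a b C f g)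
    (s t : ℝ) (k : ℕ) (hk : 1 ≤ k) (u v : ℕ → ℝ)
    (hu : ∀ j : ℕ, u j = s + j * (t - s) / k)
    (hv : ∀ j : ℕ, v j = t + j * (s - t) / k)
    (hu0 : u 0 = s) (huk : u k = t) (hv0 : v 0 = t) (hvk : v k = s) :
    unifDist
        (fun m : M s => castM M huk hu0 (compAlong μ u k)
          (castM M hvk hv0 (compAlong μ v k) m))
        (id : M s → M s) ≤
      ENNReal.ofReal (g |t - s| * k * (∑ i, C i) * (|t - s| / k) ^ (1 + ε)) := by
  have hk0 : (0 : ℝ) < k := by exact_mod_cast hk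
  have hstep : ∀ j, |u (j + 1) - u j| = |t - s| / k := by
    intro j
    rw [hu, hu, ← abs_of_pos hk0, ← abs_div, abs_of_pos hk0]
    congr 1
    push_cast
    ring
  have huv : ∀ i j, i + j = k → v j = u i := by
    intro i j hij
    have hij' : (k : ℝ) = i + j := by rw [← hij]; push_cast; ring
    rw [hu, hv]
    field_simp
    rw [hij']
    ring
  have hC : 0 ≤ ∑ i, C i := Finset.sum_nonneg fun i _ => (h.C_pos i).le
  have hg : 0 ≤ g |t - s| := zero_le_one.trans (h.g_ge_one _ (Set.mem_Ici.2 (abs_nonneg _)))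
  have hL : ∀ j < k, ∀ y y', edist (compAlong μ u j y) (compAlong μ u j y') ≤
      ENNReal.ofReal (g |t - s|) * edist y y' := by
    intro j hj y y'
    refine (h.lip_chain j u y y').trans (mul_le_mul_left (ENNReal.ofReal_le_ofReal ?_) _)
    refine h.g_mono (Set.mem_Ici.2 (Finset.sum_nonneg fun _ _ => abs_nonneg _))
      (Set.mem_Ici.2 (abs_nonneg _)) ?_
    simp only [hstep, Finset.sum_const, Finset.card_range, nsmul_eq_mul]
    have hjk : (j : ℝ) ≤ k := by exact_mod_cast hj.le
    calc (j : ℝ) * (|t - s| / k) ≤ k * (|t - s| / k) := by gcongr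
      _ = |t - s| := by field_simp
  have hK : ∀ j < k, ∀ y, edist (μ (u j) (u (j + 1)) (μ (u (j + 1)) (u j) y)) y ≤
      ENNReal.ofReal ((∑ i, C i) * (|t - s| / k) ^ (1 + ε)) := fun j _ y => by
    simpa only [hstep] using h.edist_retrace_le (u j) (u (j + 1)) y
  have hB : ENNReal.ofReal (g |t - s| * k * (∑ i, C i) * (|t - s| / k) ^ (1 + ε)) =
      k * (ENNReal.ofReal (g |t - s|) *
        ENNReal.ofReal ((∑ i, C i) * (|t - s| / k) ^ (1 + ε))) := by
    rw [← ENNReal.ofReal_natCast k, ← ENNReal.ofReal_mul hg, ← ENNReal.ofReal_mul hk0.le]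
    congr 1
    ring
  rw [hB]
  generalize ENNReal.ofReal (g |t - s|) = L at hL ⊢
  generalize ENNReal.ofReal ((∑ i, C i) * (|t - s| / k) ^ (1 + ε)) = K at hK ⊢
  clear hB hg hstep hu hv
  subst hu0 huk
  refine iSup_le fun m => ?_
  have hback : castM M hvk hv0 (compAlong μ v k) m = backAlong μ u k m := by
    refine eq_of_heq ((cast_heq _ _).trans ?_)
    exact compAlong_heq_backAlong μ u v k huv m k 0 (Nat.zero_add k) _ (cast_heq _ _)
  beta_reduce
  rw [hback]
  exact edist_forward_backAlong_le μ u k L K hL hK m k le_rfl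
end
end
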